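/- Let k₁ ≥ k₂ ≥ … ≥ k_i > 0 be positive reals, let γ > 0, and let Z₁, …, Z_i be independent geometric random variables with mean 2 (Pr{Z_j = k} = 2^{−k} for k = 1, 2, …). Then for every t > 0, Pr{ Σ_{j=1}^{i} (γ/k_j)·Z_j ≥ t } ≤ exp( −t·k_i/(3γ) + Σ_{j=1}^{i} k_i/k_j ). -/

import Mathlib

open MeasureTheory ProbabilityTheory

lemma exp_ratio_bound (a : ℝ) (h0 : 0 ≤ a) (h1 : a ≤ 1 / 3) :
    Real.exp a < 3 / 2 ∧ Real.exp a / 2 * (1 - Real.exp a / 2)⁻¹ ≤ Real.exp (3 * a) := by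
  have hx1 : 1 ≤ Real.exp a := Real.one_le_exp h0
  have h3 : Real.exp (3 * a) = Real.exp a ^ 3 := by
    rw [← Real.exp_nat_mul]; norm_num
  have hlt : Real.exp a < 3 / 2 := by
    have h4 : Real.exp a ^ 3 ≤ Real.exp 1 := by
      rw [← h3]; exact Real.exp_le_exp.mpr (by linarith)
    have h5 := Real.exp_one_lt_d9
    by_contra hcon
    push Not at hcon
    have : (3 / 2 : ℝ) ^ 3 ≤ Real.exp a ^ 3 := by gcongr
    norm_num at this
    linarith
  refine ⟨hlt, ?_⟩
  rw [h3]
  generalize Real.exp a = x at *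
  rw [← div_eq_mul_inv, div_le_iff₀ (by linarith)]
  have h6 : 0 ≤ (x - 1) * (x * (3 / 2 - x) + (1 - x / 2)) :=
    mul_nonneg (by linarith) (by nlinarith)
  nlinarith [mul_nonneg (by linarith : (0:ℝ) ≤ x) (mul_nonneg (by linarith : (0:ℝ) ≤ x - 1)
    (by nlinarith : 0 ≤ 1 + x - x ^ 2))]

lemma geom_lintegral_exp {Ω : Type} [MeasurableSpace Ω] (μ : Measure Ω)
    (Z : Ω → ℕ) (hmeas : Measurable Z)
    (hgeom : ∀ s : ℕ, μ {ω | Z ω = s} = if 1 ≤ s then (2 : ENNReal)⁻¹ ^ s else 0)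
    (a : ℝ) (h0 : 0 ≤ a) (h1 : a ≤ 1 / 3) :
    ∫⁻ ω, ENNReal.ofReal (Real.exp (a * (Z ω : ℝ))) ∂μ ≤ ENNReal.ofReal (Real.exp (3 * a)) := by
  obtain ⟨hlt, hb⟩ := exp_ratio_bound a h0 h1
  have hx0 : 0 < Real.exp a := Real.exp_pos a
  rw [← lintegral_map (f := fun n : ℕ => ENNReal.ofReal (Real.exp (a * (n : ℝ))))
    (measurable_of_countable _) hmeas, lintegral_countable',
    tsum_eq_zero_add' ENNReal.summable]
  have hm : ∀ s : ℕ, μ.map Z {s} = if 1 ≤ s then (2 : ENNReal)⁻¹ ^ s else 0 := by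
    intro s
    rw [Measure.map_apply hmeas (measurableSet_singleton s), ← hgeom s]
    rfl
  have hterm : ∀ n : ℕ, ENNReal.ofReal (Real.exp (a * ((n + 1 : ℕ) : ℝ))) * μ.map Z {n + 1}
      = ENNReal.ofReal (Real.exp a / 2 * (Real.exp a / 2) ^ n) := by
    intro n
    have h2 : (2 : ENNReal)⁻¹ = ENNReal.ofReal (2⁻¹) := by
      rw [ENNReal.ofReal_inv_of_pos (by norm_num)]; norm_num
    rw [hm, if_pos (by omega), h2, ← ENNReal.ofReal_pow (by norm_num),
      ← ENNReal.ofReal_mul (Real.exp_pos _).le, mul_comm a, Real.exp_nat_mul, ← mul_pow,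
      ← pow_succ', div_eq_mul_inv]
  simp_rw [hterm]
  rw [hm 0, if_neg (by omega), mul_zero, zero_add,
    ← ENNReal.ofReal_tsum_of_nonneg (fun n => by positivity)
      ((summable_geometric_of_lt_one (by positivity) (by linarith)).mul_left _),
    tsum_mul_left, tsum_geometric_of_lt_one (by positivity) (by linarith)]
  exact ENNReal.ofReal_le_ofReal hb

/-- If `Z₁,…,Z_i` are i.i.d. geometric random variables with mean 2
(`Pr(Z = k) = 2⁻ᵏ` for `k ≥ 1`) and `k₁ ≥ k₂ ≥ … ≥ k_i > 0`, then for every `t > 0`,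
`Pr(∑_j (γ/k_j) Z_j ≥ t) ≤ exp(-t k_i/(3γ) + ∑_j k_i/k_j)`. -/
theorem geometric_weighted_sum_tail
    (Ω : Type) [MeasurableSpace Ω] (μ : Measure Ω) [IsProbabilityMeasure μ]
    (i : ℕ) (hi : 0 < i) (Z : Fin i → Ω → ℕ) (k : Fin i → ℝ) (γ t : ℝ)
    (hmeas : ∀ j, Measurable (Z j))
    (hindep : iIndepFun Z μ)
    (hgeom : ∀ (j : Fin i) (s : ℕ),
      μ {ω | Z j ω = s} = if 1 ≤ s then (2 : ENNReal)⁻¹ ^ s else 0)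
    (hk : Antitone k) (hkpos : ∀ j, 0 < k j) (hγ : 0 < γ) (ht : 0 < t) :
    μ {ω | t ≤ ∑ j, γ / k j * (Z j ω : ℝ)} ≤
      ENNReal.ofReal
        (Real.exp (-(t * k ⟨i - 1, by omega⟩) / (3 * γ) +
          ∑ j, k ⟨i - 1, by omega⟩ / k j)) := by
  set l : Fin i := ⟨i - 1, by omega⟩ with hl
  have hkl : 0 < k l := hkpos l
  set β : ℝ := k l / (3 * γ) with hβ
  have hβ0 : 0 ≤ β := by positivity
  have hle : ∀ j, k l ≤ k j := fun j => hk (by rw [Fin.le_def]; simp only [hl]; omega)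
  let X : Fin i → Ω → ℝ := fun j ω => γ / k j * (Z j ω : ℝ)
  have hXm : ∀ j, Measurable (X j) := fun j =>
    ((measurable_of_countable (fun n : ℕ => (n : ℝ))).comp (hmeas j)).const_mul _
  have hXi : iIndepFun X μ :=
    hindep.comp (fun j (n : ℕ) => γ / k j * (n : ℝ)) (fun j => measurable_of_countable _)
  have hα : ∀ j, β * (γ / k j) = k l / k j / 3 := by
    intro j
    have := hkpos j
    rw [hβ]; field_simp
  have hlin : ∀ j, ∫⁻ ω, ENNReal.ofReal (Real.exp (β * X j ω)) ∂μ
      ≤ ENNReal.ofReal (Real.exp (k l / k j)) := by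
    intro j
    have hj := hkpos j
    have h1 : k l / k j ≤ 1 := (div_le_one hj).mpr (hle j)
    have := geom_lintegral_exp μ (Z j) (hmeas j) (hgeom j) (k l / k j / 3) (by positivity)
      (by linarith)
    rw [show 3 * (k l / k j / 3) = k l / k j by ring] at this
    simpa only [X, ← mul_assoc, hα] using this
  have hsm : ∀ j, AEStronglyMeasurable (fun ω => Real.exp (β * X j ω)) μ := fun j =>
    (Real.measurable_exp.comp ((hXm j).const_mul β)).aestronglyMeasurable
  have hint : ∀ j, Integrable (fun ω => Real.exp (β * X j ω)) μ := by
    intro j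
    refine ⟨hsm j, ?_⟩
    rw [hasFiniteIntegral_iff_ofReal (ae_of_all _ fun ω => (Real.exp_pos _).le)]
    exact (hlin j).trans_lt ENNReal.ofReal_lt_top
  have hmgf : ∀ j, mgf (X j) μ β ≤ Real.exp (k l / k j) := by
    intro j
    rw [mgf, integral_eq_lintegral_of_nonneg_ae (ae_of_all _ fun ω => (Real.exp_pos _).le) (hsm j)]
    exact ENNReal.toReal_le_of_le_ofReal (Real.exp_pos _).le (hlin j)
  have hI := hXi.integrable_exp_mul_sum hXm (s := Finset.univ) (fun j _ => hint j)
  have hmain := measure_ge_le_exp_mul_mgf t hβ0 hI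
  rw [hXi.mgf_sum hXm] at hmain
  have hset : {ω | t ≤ ∑ j, γ / k j * (Z j ω : ℝ)} = {ω | t ≤ (∑ j, X j) ω} := by
    ext ω; simp [X]
  rw [hset, ← ofReal_measureReal]
  apply ENNReal.ofReal_le_ofReal
  refine hmain.trans ?_
  rw [Real.exp_add, Real.exp_sum, show -(t * k l) / (3 * γ) = -β * t by rw [hβ]; ring]
  gcongr with j
  · exact fun j _ => mgf_nonneg
  · exact hmgf j
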